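/- arXiv:1906.11029 — 2 statements merged into one kernel-verified Lean document; each statement's English description precedes it below -/
import Mathlib

section
/- Let ω ⊆ ℝᵈ be open, let φ_b, φ_t : ω → ℝ be twice continuously differentiable with φ_b(x) < φ_t(x) for all x ∈ ω, and define φ(x,t̂) = (1−t̂)φ_b(x)+t̂φ_t(x), δ = φ_t − φ_b, and Φ(x,t̂) = (x, φ(x,t̂)). Let v : K° → ℝ^{d+1} be a continuously differentiable vector field on the open tent K° = {(x,t) : x ∈ ω, φ_b(x) < t < φ_t(x)}, and define the Piola transform v̂ : ω × (0,1) → ℝ^{d+1} by v̂ = (det Φ′) (Φ′)⁻¹ (v ∘ Φ). Then div_{x,t̂} v̂ = δ · ((div_{x,t} v) ∘ Φ) on ω × (0,1), where div denotes the full divergence in all d+1 variables. -/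
/-- The interpolated front `φ(x, t̂) = (1 − t̂) φ_b(x) + t̂ φ_t(x)`. -/
def tentPhi {d : ℕ} (φb φt : (Fin d → ℝ) → ℝ) (x : Fin d → ℝ) (t : ℝ) : ℝ :=
  (1 - t) * φb x + t * φt x

/-- The tent map `Φ(x, t̂) = (x, φ(x, t̂))`. -/
def tentMap {d : ℕ} (φb φt : (Fin d → ℝ) → ℝ) (p : (Fin d → ℝ) × ℝ) :
    (Fin d → ℝ) × ℝ :=
  (p.1, tentPhi φb φt p.1 p.2)

/-- The Jacobian of the tent map `Φ` as the block matrix `Φ′ = [[I_d, 0], [∇_xφᵀ, δ]]`,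
indexed by `Fin d ⊕ Unit`. -/
noncomputable def tentJacobianMatrix {d : ℕ} (φb φt : (Fin d → ℝ) → ℝ)
    (x : Fin d → ℝ) (t : ℝ) : Matrix (Fin d ⊕ Unit) (Fin d ⊕ Unit) ℝ :=
  Matrix.fromBlocks 1 0
    (Matrix.of fun (_ : Unit) j => fderiv ℝ (fun y => tentPhi φb φt y t) x (Pi.single j 1))
    (Matrix.of fun (_ : Unit) (_ : Unit) => φt x - φb x)

/-- Identify a spacetime vector `(w, s) ∈ ℝᵈ × ℝ` with a vector indexed by
`Fin d ⊕ Unit`. -/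
def toSumVec {d : ℕ} (w : (Fin d → ℝ) × ℝ) : Fin d ⊕ Unit → ℝ :=
  Sum.elim w.1 (fun _ => w.2)

/-- Identify a vector indexed by `Fin d ⊕ Unit` with a spacetime vector in `ℝᵈ × ℝ`. -/
def ofSumVec {d : ℕ} (w : Fin d ⊕ Unit → ℝ) : (Fin d → ℝ) × ℝ :=
  (fun j => w (Sum.inl j), w (Sum.inr ()))

/-- The Piola transform `v̂ = (det Φ′) (Φ′)⁻¹ (v ∘ Φ)` of a spacetime vector field `v`
under the tent map `Φ`, using `det Φ′ = δ`. -/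
noncomputable def piolaTransform {d : ℕ} (φb φt : (Fin d → ℝ) → ℝ)
    (v : (Fin d → ℝ) × ℝ → (Fin d → ℝ) × ℝ) (p : (Fin d → ℝ) × ℝ) :
    (Fin d → ℝ) × ℝ :=
  ofSumVec ((φt p.1 - φb p.1) •
    (tentJacobianMatrix φb φt p.1 p.2)⁻¹.mulVec (toSumVec (v (tentMap φb φt p))))

/-- The full spacetime divergence of a vector field on `ℝᵈ × ℝ` (sum of the partial
derivatives of all `d + 1` components in all `d + 1` variables). -/
noncomputable def divST {d : ℕ} (w : (Fin d → ℝ) × ℝ → (Fin d → ℝ) × ℝ)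
    (p : (Fin d → ℝ) × ℝ) : ℝ :=
  (∑ j : Fin d, fderiv ℝ (fun q => (w q).1 j) p (Pi.single j 1, 0))
    + fderiv ℝ (fun q => (w q).2) p (0, 1)

/-! Write the Piola transform as `v̂ = B (v ∘ Φ)` with `B = δ (Φ′)⁻¹ = adj Φ′`. By the product
rule, `div v̂` at `p` is the trace of `B Dv Φ′` plus the divergence of `B` applied to the constant
vector `v (Φ p)`. The trace is cyclic and `Φ′ B = δ`, so the first term is `δ div v`. The second
vanishes (Piola's identity) because `B (w, s) = (δ w, s - ∇φ · w)` and `∂φ/∂t̂ = δ`. -/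

theorem sum_map_single_mul {ι R F : Type*} [Fintype ι] [DecidableEq ι] [CommSemiring R]
    [FunLike F (ι → R) R] [LinearMapClass F R (ι → R) R] (f : F) (w : ι → R) :
    ∑ j, f (Pi.single j 1) * w j = f w := by
  conv_rhs => rw [← Finset.univ_sum_single w, map_sum]
  refine Finset.sum_congr rfl fun j _ => ?_
  rw [mul_comm, ← smul_eq_mul, ← map_smul, ← Pi.single_smul, smul_eq_mul, mul_one]

theorem trace_fderiv_clm_apply_comp {𝕜 E : Type*} [NontriviallyNormedField 𝕜]
    [NormedAddCommGroup E] [NormedSpace 𝕜 E] {B : E → E →L[𝕜] E} {v Φ : E → E} {Φ' : E →L[𝕜] E}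
    {p : E} {c : 𝕜} (hB : DifferentiableAt 𝕜 B p) (hΦ : HasFDerivAt Φ Φ' p)
    (hv : DifferentiableAt 𝕜 v (Φ p)) (hc : Φ' ∘L B p = c • ContinuousLinearMap.id 𝕜 E) :
    LinearMap.trace 𝕜 E (fderiv 𝕜 (fun q => B q (v (Φ q))) p).toLinearMap =
      c * LinearMap.trace 𝕜 E (fderiv 𝕜 v (Φ p)).toLinearMap +
        LinearMap.trace 𝕜 E (fderiv 𝕜 (fun q => B q (v (Φ p))) p).toLinearMap := by
  set v' := fderiv 𝕜 v (Φ p)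
  have hmoving : HasFDerivAt (fun q => B q (v (Φ q)))
      (B p ∘L v' ∘L Φ' + (fderiv 𝕜 B p).flip (v (Φ p))) p :=
    hB.hasFDerivAt.clm_apply (hv.hasFDerivAt.comp p hΦ)
  have hconst : HasFDerivAt (fun q => B q (v (Φ p))) ((fderiv 𝕜 B p).flip (v (Φ p))) p := by
    simpa using hB.hasFDerivAt.clm_apply (hasFDerivAt_const (v (Φ p)) p)
  have hcycle : LinearMap.trace 𝕜 E (B p ∘L v' ∘L Φ').toLinearMap =
      c * LinearMap.trace 𝕜 E v'.toLinearMap :=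
    calc LinearMap.trace 𝕜 E (B p ∘L v' ∘L Φ').toLinearMap
        = LinearMap.trace 𝕜 E (v' ∘L Φ' ∘L B p).toLinearMap :=
          LinearMap.trace_mul_comm 𝕜 (B p).toLinearMap (v' ∘L Φ').toLinearMap
      _ = c * LinearMap.trace 𝕜 E v'.toLinearMap := by simp [hc]
  rw [hmoving.fderiv, hconst.fderiv, ContinuousLinearMap.toLinearMap_add, map_add, hcycle]

section Divergence

variable {d : ℕ} {p : (Fin d → ℝ) × ℝ}

theorem divST_congr {w₁ w₂ : (Fin d → ℝ) × ℝ → (Fin d → ℝ) × ℝ} (h : w₁ =ᶠ[nhds p] w₂) :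
    divST w₁ p = divST w₂ p := by
  have hfst (j : Fin d) : (fun q => (w₁ q).1 j) =ᶠ[nhds p] fun q => (w₂ q).1 j :=
    h.fun_comp fun u => u.1 j
  have hsnd : (fun q => (w₁ q).2) =ᶠ[nhds p] fun q => (w₂ q).2 := h.fun_comp Prod.snd
  simp only [divST, (hfst _).fderiv_eq, hsnd.fderiv_eq]

theorem divST_eq_trace {w : (Fin d → ℝ) × ℝ → (Fin d → ℝ) × ℝ} (hw : DifferentiableAt ℝ w p) :
    divST w p = LinearMap.trace ℝ _ (fderiv ℝ w p).toLinearMap := by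
  have hfst (j : Fin d) := hasFDerivAt_pi'.1 hw.hasFDerivAt.fst j
  rw [LinearMap.trace_eq_matrix_trace ℝ
    ((Pi.basisFun ℝ (Fin d)).prod (Module.Basis.singleton Unit ℝ))]
  simp [divST, (hfst _).fderiv, hw.hasFDerivAt.snd.fderiv, Matrix.trace, LinearMap.toMatrix_apply]

theorem divST_clm_apply_comp {B : (Fin d → ℝ) × ℝ → (Fin d → ℝ) × ℝ →L[ℝ] (Fin d → ℝ) × ℝ}
    {v Φ : (Fin d → ℝ) × ℝ → (Fin d → ℝ) × ℝ} {Φ' : (Fin d → ℝ) × ℝ →L[ℝ] (Fin d → ℝ) × ℝ}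
    {c : ℝ} (hB : DifferentiableAt ℝ B p) (hΦ : HasFDerivAt Φ Φ' p)
    (hv : DifferentiableAt ℝ v (Φ p)) (hc : Φ' ∘L B p = c • ContinuousLinearMap.id ℝ _) :
    divST (fun q => B q (v (Φ q))) p = c * divST v (Φ p) + divST (fun q => B q (v (Φ p))) p := by
  have hmoving : DifferentiableAt ℝ (fun q => B q (v (Φ q))) p :=
    hB.clm_apply (hv.comp p hΦ.differentiableAt)
  have hconst : DifferentiableAt ℝ (fun q => B q (v (Φ p))) p :=
    hB.clm_apply (differentiableAt_const _)
  rw [divST_eq_trace hmoving, divST_eq_trace hv, divST_eq_trace hconst,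
    trace_fderiv_clm_apply_comp hB hΦ hv hc]

end Divergence

section TentMap

variable {E : Type*} [NormedAddCommGroup E] [NormedSpace ℝ E] {φb φt : E → ℝ} {p : E × ℝ}

/-- The spatial gradient `∇_xφ` of the interpolated front at `p = (x, t̂)`, as a linear form. -/
noncomputable def tentGrad (φb φt : E → ℝ) (p : E × ℝ) : E →L[ℝ] ℝ :=
  (1 - p.2) • fderiv ℝ φb p.1 + p.2 • fderiv ℝ φt p.1

/-- The derivative `Φ′ = [[I, 0], [∇_xφᵀ, δ]]` of the tent map, as a continuous linear map. -/
noncomputable def tentDeriv (φb φt : E → ℝ) (p : E × ℝ) : E × ℝ →L[ℝ] E × ℝ :=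
  (ContinuousLinearMap.fst ℝ E ℝ).prod
    ((tentGrad φb φt p).coprod ((φt p.1 - φb p.1) • ContinuousLinearMap.id ℝ ℝ))

/-- The adjugate `[[δ I, 0], [-∇_xφᵀ, 1]]` of `Φ′`, which equals `δ (Φ′)⁻¹` where `δ ≠ 0`. -/
noncomputable def tentAdjugate (φb φt : E → ℝ) (p : E × ℝ) : E × ℝ →L[ℝ] E × ℝ :=
  ((φt p.1 - φb p.1) • ContinuousLinearMap.fst ℝ E ℝ).prod
    (ContinuousLinearMap.snd ℝ E ℝ - tentGrad φb φt p ∘L ContinuousLinearMap.fst ℝ E ℝ)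

theorem tentDeriv_comp_tentAdjugate (φb φt : E → ℝ) (p : E × ℝ) :
    tentDeriv φb φt p ∘L tentAdjugate φb φt p =
      (φt p.1 - φb p.1) • ContinuousLinearMap.id ℝ (E × ℝ) := by
  refine ContinuousLinearMap.ext fun u => Prod.ext ?_ ?_ <;>
    simp [tentDeriv, tentAdjugate, mul_sub]

theorem differentiableAt_tentGrad (hb : DifferentiableAt ℝ (fderiv ℝ φb) p.1)
    (ht : DifferentiableAt ℝ (fderiv ℝ φt) p.1) : DifferentiableAt ℝ (tentGrad φb φt) p := by
  unfold tentGrad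
  fun_prop

theorem differentiableAt_tentAdjugate (hb : DifferentiableAt ℝ φb p.1)
    (ht : DifferentiableAt ℝ φt p.1) (hgrad : DifferentiableAt ℝ (tentGrad φb φt) p) :
    DifferentiableAt ℝ (tentAdjugate φb φt) p := by
  have hpair : DifferentiableAt ℝ (fun q : E × ℝ =>
      ((φt q.1 - φb q.1) • ContinuousLinearMap.fst ℝ E ℝ,
        ContinuousLinearMap.snd ℝ E ℝ - tentGrad φb φt q ∘L ContinuousLinearMap.fst ℝ E ℝ)) p := by
    fun_prop
  exact (ContinuousLinearMap.prodₗᵢ ℝ).differentiableAt.comp p hpair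

theorem fderiv_tentGrad_apply_time (hgrad : DifferentiableAt ℝ (tentGrad φb φt) p) (w : E) :
    fderiv ℝ (fun q => tentGrad φb φt q w) p (0, 1) =
      fderiv ℝ φt p.1 w - fderiv ℝ φb p.1 w := by
  rw [← (hgrad.clm_apply (differentiableAt_const w)).lineDeriv_eq_fderiv]
  have htime : HasDerivAt (fun τ : ℝ => p.2 + τ) 1 0 := (hasDerivAt_id 0).const_add p.2
  have hline : HasLineDerivAt ℝ (fun q => tentGrad φb φt q w)
      (fderiv ℝ φt p.1 w - fderiv ℝ φb p.1 w) p (0, 1) := by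
    simpa [HasLineDerivAt, tentGrad, neg_add_eq_sub] using!
      ((htime.const_sub 1).mul_const (fderiv ℝ φb p.1 w)).add
        (htime.mul_const (fderiv ℝ φt p.1 w))
  exact hline.lineDeriv

end TentMap

section PiolaTransform

variable {d : ℕ} {φb φt : (Fin d → ℝ) → ℝ} {p : (Fin d → ℝ) × ℝ}

theorem hasFDerivAt_tentPhi (hb : DifferentiableAt ℝ φb p.1) (ht : DifferentiableAt ℝ φt p.1) :
    HasFDerivAt (fun q : (Fin d → ℝ) × ℝ => tentPhi φb φt q.1 q.2)
      ((tentGrad φb φt p).coprod ((φt p.1 - φb p.1) • ContinuousLinearMap.id ℝ ℝ)) p := by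
  have hb' := hb.hasFDerivAt.comp p hasFDerivAt_fst
  have ht' := ht.hasFDerivAt.comp p hasFDerivAt_fst
  have hsnd : HasFDerivAt Prod.snd (ContinuousLinearMap.snd ℝ (Fin d → ℝ) ℝ) p := hasFDerivAt_snd
  refine (((hsnd.const_sub 1).mul hb').add (hsnd.mul ht')).congr_fderiv ?_
  refine ContinuousLinearMap.ext fun u => ?_
  simp only [tentGrad, Function.comp_apply, ContinuousLinearMap.coprod_apply, add_apply, smul_apply,
    smul_neg, neg_apply, ContinuousLinearMap.comp_apply, ContinuousLinearMap.coe_fst',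
    ContinuousLinearMap.coe_snd', ContinuousLinearMap.id_apply, smul_eq_mul]
  ring

theorem hasFDerivAt_tentMap (hb : DifferentiableAt ℝ φb p.1) (ht : DifferentiableAt ℝ φt p.1) :
    HasFDerivAt (tentMap φb φt) (tentDeriv φb φt p) p :=
  hasFDerivAt_fst.prodMk (hasFDerivAt_tentPhi hb ht)

theorem fderiv_tentPhi_left (hb : DifferentiableAt ℝ φb p.1) (ht : DifferentiableAt ℝ φt p.1) :
    fderiv ℝ (fun y => tentPhi φb φt y p.2) p.1 = tentGrad φb φt p := by
  have h := HasFDerivAt.comp (g := fun q : (Fin d → ℝ) × ℝ => tentPhi φb φt q.1 q.2) p.1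
    (hasFDerivAt_tentPhi hb ht) (hasFDerivAt_prodMk_left p.1 p.2)
  simpa using! h.fderiv

theorem det_tentJacobianMatrix (φb φt : (Fin d → ℝ) → ℝ) (x : Fin d → ℝ) (t : ℝ) :
    (tentJacobianMatrix φb φt x t).det = φt x - φb x := by
  simp [tentJacobianMatrix, Matrix.det_fromBlocks_zero₁₂]

theorem tentJacobianMatrix_mulVec_toSumVec (hb : DifferentiableAt ℝ φb p.1)
    (ht : DifferentiableAt ℝ φt p.1) (u : (Fin d → ℝ) × ℝ) :
    (tentJacobianMatrix φb φt p.1 p.2).mulVec (toSumVec u) = toSumVec (tentDeriv φb φt p u) := by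
  rw [tentJacobianMatrix, fderiv_tentPhi_left hb ht, Matrix.fromBlocks_mulVec]
  ext (j | _)
  · simp [toSumVec, tentDeriv, Function.comp_def]
  · simp [toSumVec, tentDeriv, Function.comp_def, Matrix.mulVec, dotProduct, sum_map_single_mul]

theorem piolaTransform_eq_tentAdjugate (hb : DifferentiableAt ℝ φb p.1)
    (ht : DifferentiableAt ℝ φt p.1) (hne : φb p.1 ≠ φt p.1)
    (v : (Fin d → ℝ) × ℝ → (Fin d → ℝ) × ℝ) :
    piolaTransform φb φt v p = tentAdjugate φb φt p (v (tentMap φb φt p)) := by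
  set u := v (tentMap φb φt p) with hu
  have hdet : IsUnit (tentJacobianMatrix φb φt p.1 p.2).det := by
    simpa [det_tentJacobianMatrix, sub_eq_zero] using hne.symm
  have hsolve : (tentJacobianMatrix φb φt p.1 p.2).mulVec (toSumVec (tentAdjugate φb φt p u)) =
      (φt p.1 - φb p.1) • toSumVec u := by
    rw [tentJacobianMatrix_mulVec_toSumVec hb ht, ← ContinuousLinearMap.comp_apply,
      tentDeriv_comp_tentAdjugate]
    ext (_ | _) <;> rfl
  rw [piolaTransform, ← Matrix.mulVec_smul, ← hu, ← hsolve, Matrix.mulVec_mulVec,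
    Matrix.nonsing_inv_mul _ hdet, Matrix.one_mulVec]
  rfl

theorem divST_tentAdjugate_apply (hb : DifferentiableAt ℝ φb p.1)
    (ht : DifferentiableAt ℝ φt p.1) (hgrad : DifferentiableAt ℝ (tentGrad φb φt) p)
    (u : (Fin d → ℝ) × ℝ) :
    divST (fun q => tentAdjugate φb φt q u) p = 0 := by
  have hspace (j : Fin d) : fderiv ℝ (fun q => (tentAdjugate φb φt q u).1 j) p (Pi.single j 1, 0) =
      (fderiv ℝ φt p.1 - fderiv ℝ φb p.1) (Pi.single j 1) * u.1 j := by
    have h := ((ht.hasFDerivAt.comp p hasFDerivAt_fst).sub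
      (hb.hasFDerivAt.comp p hasFDerivAt_fst)).mul_const (u.1 j)
    simpa [mul_comm] using! DFunLike.congr_fun h.fderiv (Pi.single j 1, 0)
  have htime : fderiv ℝ (fun q => (tentAdjugate φb φt q u).2) p (0, 1) =
      -(fderiv ℝ φt p.1 - fderiv ℝ φb p.1) u.1 := by
    simp [tentAdjugate, fderiv_const_sub, fderiv_tentGrad_apply_time hgrad]
  rw [divST, htime, Finset.sum_congr rfl fun j _ => hspace j, sum_map_single_mul, add_neg_cancel]

theorem tentPhi_mem_Ioo {x : Fin d → ℝ} {t : ℝ} (hlt : φb x < φt x) (ht : t ∈ Set.Ioo (0 : ℝ) 1) :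
    tentPhi φb φt x t ∈ Set.Ioo (φb x) (φt x) :=
  openSegment_subset_Ioo hlt ⟨1 - t, t, sub_pos.2 ht.2, ht.1, sub_add_cancel 1 t, rfl⟩

theorem piolaTransform_eventuallyEq (hb : ContDiffAt ℝ 1 φb p.1) (ht : ContDiffAt ℝ 1 φt p.1)
    (hne : φb p.1 ≠ φt p.1) (v : (Fin d → ℝ) × ℝ → (Fin d → ℝ) × ℝ) :
    piolaTransform φb φt v =ᶠ[nhds p] fun q => tentAdjugate φb φt q (v (tentMap φb φt q)) := by
  have hnear : ∀ᶠ x in nhds p.1, ContDiffAt ℝ 1 φb x ∧ ContDiffAt ℝ 1 φt x ∧ φb x ≠ φt x :=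
    (hb.eventually (by simp)).and <| (ht.eventually (by simp)).and <|
      (hb.continuousAt.ne_iff_eventually_ne ht.continuousAt).1 hne
  filter_upwards [continuousAt_fst.eventually hnear] with q ⟨hbq, htq, hneq⟩
  exact piolaTransform_eq_tentAdjugate (hbq.differentiableAt one_ne_zero)
    (htq.differentiableAt one_ne_zero) hneq v

theorem piola_divergence_general {v : (Fin d → ℝ) × ℝ → (Fin d → ℝ) × ℝ}
    (hb : ContDiffAt ℝ 2 φb p.1) (ht : ContDiffAt ℝ 2 φt p.1) (hne : φb p.1 ≠ φt p.1)
    (hv : DifferentiableAt ℝ v (tentMap φb φt p)) :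
    divST (piolaTransform φb φt v) p = (φt p.1 - φb p.1) * divST v (tentMap φb φt p) := by
  have hb' : DifferentiableAt ℝ φb p.1 := hb.differentiableAt two_ne_zero
  have ht' : DifferentiableAt ℝ φt p.1 := ht.differentiableAt two_ne_zero
  have hgrad : DifferentiableAt ℝ (tentGrad φb φt) p :=
    differentiableAt_tentGrad ((hb.fderiv_right le_rfl).differentiableAt one_ne_zero)
      ((ht.fderiv_right le_rfl).differentiableAt one_ne_zero)
  calc divST (piolaTransform φb φt v) p
      = divST (fun q => tentAdjugate φb φt q (v (tentMap φb φt q))) p :=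
        divST_congr (piolaTransform_eventuallyEq (hb.of_le one_le_two) (ht.of_le one_le_two) hne v)
    _ = (φt p.1 - φb p.1) * divST v (tentMap φb φt p) +
          divST (fun q => tentAdjugate φb φt q (v (tentMap φb φt p))) p :=
        divST_clm_apply_comp (differentiableAt_tentAdjugate hb' ht' hgrad)
          (hasFDerivAt_tentMap hb' ht') hv (tentDeriv_comp_tentAdjugate φb φt p)
    _ = (φt p.1 - φb p.1) * divST v (tentMap φb φt p) := by
        rw [divST_tentAdjugate_apply hb' ht' hgrad, add_zero]

end PiolaTransform

/-- Algebraic transformation of the divergence by the Piola transform: for `C²` fronts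
with `φ_b < φ_t` on an open set `ω` and a `C¹` vector field `v` on the open tent `K°`,
the Piola transform `v̂ = (det Φ′)(Φ′)⁻¹(v ∘ Φ)` satisfies
`div_{x,t̂} v̂ = δ · ((div_{x,t} v) ∘ Φ)` on `ω × (0,1)`. -/
theorem piola_divergence (d : ℕ) (ω : Set (Fin d → ℝ)) (hω : IsOpen ω)
    (φb φt : (Fin d → ℝ) → ℝ)
    (hb : ∀ x ∈ ω, ContDiffAt ℝ 2 φb x)
    (ht : ∀ x ∈ ω, ContDiffAt ℝ 2 φt x)
    (hlt : ∀ x ∈ ω, φb x < φt x)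
    (v : (Fin d → ℝ) × ℝ → (Fin d → ℝ) × ℝ)
    (hv : ∀ p : (Fin d → ℝ) × ℝ,
      p.1 ∈ ω → φb p.1 < p.2 → p.2 < φt p.1 → ContDiffAt ℝ 1 v p) :
    ∀ x ∈ ω, ∀ t ∈ Set.Ioo (0 : ℝ) 1,
      divST (piolaTransform φb φt v) (x, t)
        = (φt x - φb x) * divST v (tentMap φb φt (x, t)) := by
  intro x hx t ht01
  have hΦ := tentPhi_mem_Ioo (hlt x hx) ht01
  exact piola_divergence_general (hb x hx) (ht x hx) (hlt x hx).ne
    ((hv _ hx hΦ.1 hΦ.2).differentiableAt one_ne_zero)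
end

section
/- Let ε, μ > 0, let Ω ⊆ ℝ³ be a measurable set, let γ < √(εμ), and let g : Ω → ℝ³ be measurable with |g(x)| ≤ γ for almost every x ∈ Ω. Define on L²(Ω; ℝ³×ℝ³) the bilinear form a(u, v) = ∫_Ω (εE − H×g)·v_E + (μH + E×g)·v_H dx for u = (E,H), v = (v_E, v_H). Let V be any finite-dimensional linear subspace of L²(Ω; ℝ³×ℝ³). Then for every w ∈ L²(Ω; ℝ³×ℝ³) there exists a unique û ∈ V such that a(û, v̂) = ∫_Ω w·v̂ dx for all v̂ ∈ V. -/
open MeasureTheory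

/-- Euclidean dot product on `ℝ³`. -/
def dot3 (u v : Fin 3 → ℝ) : ℝ := ∑ i, u i * v i

/-- Euclidean norm on `ℝ³`. -/
noncomputable def norm3 (u : Fin 3 → ℝ) : ℝ := Real.sqrt (dot3 u u)

/-- Cross product on `ℝ³`. -/
def cross3 (u v : Fin 3 → ℝ) : Fin 3 → ℝ :=
  ![u 1 * v 2 - u 2 * v 1, u 2 * v 0 - u 0 * v 2, u 0 * v 1 - u 1 * v 0]

/-- The mapped-tent bilinear form
`a(u, v) = ∫_Ω (εE − H×g)·v_E + (μH + E×g)·v_H dx` for `u = (E, H)`,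
`v = (v_E, v_H)`. -/
noncomputable def aform (ε μ : ℝ) (Ω : Set (Fin 3 → ℝ))
    (g : (Fin 3 → ℝ) → (Fin 3 → ℝ))
    (u v : (Fin 3 → ℝ) → (Fin 3 → ℝ) × (Fin 3 → ℝ)) : ℝ :=
  ∫ x in Ω,
    (dot3 (fun i => ε * (u x).1 i - cross3 (u x).2 (g x) i) ((v x).1)
      + dot3 (fun i => μ * (u x).2 i + cross3 (u x).1 (g x) i) ((v x).2))

/-!
Completing the square in `E` writes `ε` times the integrand of `a(z, z)`, at `z = (E, H)`, as
`|εE − H×g|² + (εμ − |g|²)|H|² + (H·g)²`, which is positive for `z ≠ 0` as soon as `|g|² < εμ`.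
Hence `ε a(u, u) > 0` for every nonzero `u ∈ L²`, so `u ↦ a(u, ·)` is injective from `V` to its
dual, and therefore bijective because the two spaces have the same finite dimension.
-/

open scoped ENNReal Matrix

theorem existsUnique_forall_apply_eq_of_anisotropic {K V : Type*} [Field K] [AddCommGroup V]
    [Module K V] [FiniteDimensional K V] {B : V →ₗ[K] V →ₗ[K] K}
    (hB : ∀ u, B u u = 0 → u = 0) (ℓ : Module.Dual K V) :
    ∃! u, ∀ v, B u v = ℓ v := by
  have B_injective : Function.Injective B :=
    (injective_iff_map_eq_zero B).2 fun u hu ↦ hB u (by rw [hu, LinearMap.zero_apply])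
  have B_surjective : Function.Surjective B :=
    (LinearMap.injective_iff_surjective_of_finrank_eq_finrank
      Subspace.dual_finrank_eq.symm).1 B_injective
  simpa only [LinearMap.ext_iff] using
    Function.Bijective.existsUnique ⟨B_injective, B_surjective⟩ ℓ

theorem memLp_top_of_dotProduct_self_le {α ι : Type*} [Fintype ι] {m : MeasurableSpace α}
    {ν : Measure α} {g : α → ι → ℝ} {c : ℝ} (hg : AEStronglyMeasurable g ν)
    (hbound : ∀ᵐ x ∂ν, g x ⬝ᵥ g x ≤ c) : MemLp g ∞ ν := by
  refine memLp_top_of_bound hg √c ?_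
  filter_upwards [hbound] with x hx
  refine (pi_norm_le_iff_of_nonneg (Real.sqrt_nonneg c)).2 fun i ↦ Real.abs_le_sqrt ?_
  calc g x i ^ 2 = g x i * g x i := sq _
    _ ≤ g x ⬝ᵥ g x := Finset.single_le_sum (f := fun i ↦ g x i * g x i)
        (fun i _ ↦ mul_self_nonneg (g x i)) (Finset.mem_univ i)
    _ ≤ c := hx

theorem lpPairing_pos {α E F : Type*} {m : MeasurableSpace α} {ν : Measure α} {p q : ℝ≥0∞}
    [Fact (1 ≤ p)] [Fact (1 ≤ q)] [p.HolderConjugate q] [NormedAddCommGroup E] [NormedSpace ℝ E]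
    [NormedAddCommGroup F] [NormedSpace ℝ F] (B : E →L[ℝ] F →L[ℝ] ℝ) {u : Lp E p ν} {v : Lp F q ν}
    (hpos : ∀ᵐ x ∂ν, v x ≠ 0 → 0 < B (u x) (v x)) (hv : v ≠ 0) :
    0 < B.lpPairing ν p q u v := by
  have integrable : Integrable (fun x ↦ B (u x) (v x)) ν :=
    memLp_one_iff_integrable.1 (B.memLp_of_bilin 1 (Lp.memLp u) (Lp.memLp v))
  have nonneg : 0 ≤ᵐ[ν] fun x ↦ B (u x) (v x) := by
    filter_upwards [hpos] with x hx
    rcases eq_or_ne (v x) 0 with hvx | hvx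
    · simp [hvx]
    · exact (hx hvx).le
  rw [B.lpPairing_eq_integral]
  refine (integral_nonneg_of_ae nonneg).lt_of_ne fun integral_eq_zero ↦ hv ?_
  rw [Lp.eq_zero_iff_ae_eq_zero]
  filter_upwards [hpos,
    (integral_eq_zero_iff_of_nonneg_ae nonneg integrable).1 integral_eq_zero.symm] with x hx hzero
  by_contra hvx
  exact (hx hvx).ne' hzero

/-- Pointwise values `(E, H)` of an electromagnetic field. The norm is the sup norm, as in the `L²`
space of the theorem; the Euclidean structure enters through `fieldDot`. -/
abbrev EMField : Type := (Fin 3 → ℝ) × (Fin 3 → ℝ)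

/-- The Euclidean inner product `E·E' + H·H'` on `ℝ³ × ℝ³`, as a continuous bilinear map. -/
noncomputable def fieldDot : EMField →L[ℝ] EMField →L[ℝ] ℝ :=
  LinearMap.toContinuousBilinearMap <|
    (dotProductBilin ℝ ℝ).compl₁₂ (LinearMap.fst ℝ _ _) (LinearMap.fst ℝ _ _) +
      (dotProductBilin ℝ ℝ).compl₁₂ (LinearMap.snd ℝ _ _) (LinearMap.snd ℝ _ _)

theorem fieldDot_apply (y z : EMField) : fieldDot y z = y.1 ⬝ᵥ z.1 + y.2 ⬝ᵥ z.2 :=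
  rfl

/-- The coupling `(E, H) ↦ (−H×g, E×g)` of the two fields through a tent gradient `g`, as a bilinear
map of `g` and `(E, H)`; the first component is encoded as `g×H`. -/
noncomputable def tentCoupling : (Fin 3 → ℝ) →L[ℝ] EMField →L[ℝ] EMField :=
  LinearMap.toContinuousBilinearMap <|
    LinearMap.mk₂ ℝ (fun g z ↦ (g ⨯₃ z.2, z.1 ⨯₃ g))
      (by simp) (by simp) (by simp) (by simp)

/-- The material law `(E, H) ↦ (εE, μH)`: the part of the mass operator that does not involve the
tent. -/
noncomputable def materialLaw (ε μ : ℝ) : EMField →L[ℝ] EMField :=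
  (ε • ContinuousLinearMap.id ℝ _).prodMap (μ • ContinuousLinearMap.id ℝ _)

/-- The mass operator `(E, H) ↦ (εE − H×g, μH + E×g)` at a point where the tent has gradient `g`;
its inner product with the test field is the integrand of `aform`. -/
noncomputable def massOperator (ε μ : ℝ) (g : Fin 3 → ℝ) (z : EMField) : EMField :=
  (ε • z.1 - z.2 ⨯₃ g, μ • z.2 + z.1 ⨯₃ g)

theorem materialLaw_add_tentCoupling (ε μ : ℝ) (g : Fin 3 → ℝ) (z : EMField) :
    materialLaw ε μ z + tentCoupling g z = massOperator ε μ g z :=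
  Prod.ext (by rw [massOperator, ← cross_anticomm g z.2, sub_neg_eq_add]; rfl) rfl

theorem mul_fieldDot_massOperator_self (ε μ : ℝ) (g : Fin 3 → ℝ) (z : EMField) :
    ε * fieldDot (massOperator ε μ g z) z =
      (ε • z.1 - z.2 ⨯₃ g) ⬝ᵥ (ε • z.1 - z.2 ⨯₃ g) + (ε * μ - g ⬝ᵥ g) * (z.2 ⬝ᵥ z.2) +
        (z.2 ⬝ᵥ g) ^ 2 := by
  have cross_skew : z.1 ⨯₃ g ⬝ᵥ z.2 = -(z.2 ⨯₃ g ⬝ᵥ z.1) := by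
    rw [dotProduct_comm, triple_product_permutation, ← cross_anticomm, dotProduct_neg,
      dotProduct_comm]
  have lagrange : z.2 ⨯₃ g ⬝ᵥ z.2 ⨯₃ g = (z.2 ⬝ᵥ z.2) * (g ⬝ᵥ g) - (z.2 ⬝ᵥ g) ^ 2 := by
    rw [cross_dot_cross, dotProduct_comm g z.2, sq]
  simp only [fieldDot_apply, massOperator, add_dotProduct, sub_dotProduct, dotProduct_sub,
    smul_dotProduct, dotProduct_smul, smul_eq_mul, dotProduct_comm z.1 (z.2 ⨯₃ g), cross_skew,
    lagrange]
  ring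

theorem mul_fieldDot_massOperator_self_pos {ε μ : ℝ} {g : Fin 3 → ℝ} (hg : g ⬝ᵥ g < ε * μ)
    {z : EMField} (hz : z ≠ 0) : 0 < ε * fieldDot (massOperator ε μ g z) z := by
  have dot_self_nonneg (y : Fin 3 → ℝ) : 0 ≤ y ⬝ᵥ y := dotProduct_self_star_nonneg y
  have dot_self_pos {y : Fin 3 → ℝ} (hy : y ≠ 0) : 0 < y ⬝ᵥ y :=
    Matrix.dotProduct_self_star_pos_iff.2 hy
  rw [mul_fieldDot_massOperator_self]
  rcases eq_or_ne z.2 0 with hH | hH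
  · have hE : z.1 ≠ 0 := fun hE ↦ hz (Prod.ext hE hH)
    have hε : ε ≠ 0 := left_ne_zero_of_mul ((dot_self_nonneg g).trans_lt hg).ne'
    simpa [hH] using dot_self_pos (smul_ne_zero hε hE)
  · exact add_pos_of_pos_of_nonneg
      (add_pos_of_nonneg_of_pos (dot_self_nonneg _) (mul_pos (sub_pos.2 hg) (dot_self_pos hH)))
      (sq_nonneg _)

section MassMatrix

variable {α : Type*} {m : MeasurableSpace α} {ν : Measure α} {ε μ : ℝ}

/-- Pointwise application of the mass operators of a bounded gradient field `g`, as an operator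
on `L²`. -/
noncomputable def massOperatorLp (ε μ : ℝ) (g : Lp (Fin 3 → ℝ) ∞ ν) :
    Lp EMField 2 ν →L[ℝ] Lp EMField 2 ν :=
  (materialLaw ε μ).compLpL 2 ν + tentCoupling.holderL ν ∞ 2 2 g

theorem coeFn_massOperatorLp (ε μ : ℝ) (g : Lp (Fin 3 → ℝ) ∞ ν) (u : Lp EMField 2 ν) :
    massOperatorLp ε μ g u =ᵐ[ν] fun x ↦ massOperator ε μ (g x) (u x) := by
  filter_upwards [Lp.coeFn_add ((materialLaw ε μ).compLp u) (tentCoupling.holder 2 g u),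
    (materialLaw ε μ).coeFn_compLp u, tentCoupling.coeFn_holder (r := 2) g u]
    with x hadd hlaw hcoupling
  rw [← materialLaw_add_tentCoupling, ← hlaw, ← hcoupling]
  exact hadd

/-- The mapped-tent form of a bounded gradient field `g`, as a bilinear form on `L²`. -/
noncomputable def massForm (ε μ : ℝ) (g : Lp (Fin 3 → ℝ) ∞ ν) :
    Lp EMField 2 ν →L[ℝ] Lp EMField 2 ν →L[ℝ] ℝ :=
  fieldDot.lpPairing ν 2 2 ∘L massOperatorLp ε μ g

theorem massForm_apply (ε μ : ℝ) (g : Lp (Fin 3 → ℝ) ∞ ν) (u v : Lp EMField 2 ν) :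
    massForm ε μ g u v = ∫ x, fieldDot (massOperator ε μ (g x) (u x)) (v x) ∂ν := by
  rw [massForm, ContinuousLinearMap.comp_apply, fieldDot.lpPairing_eq_integral]
  refine integral_congr_ae ?_
  filter_upwards [coeFn_massOperatorLp ε μ g u] with x hx
  rw [hx]

theorem mul_massForm_self_pos {g : Lp (Fin 3 → ℝ) ∞ ν} (hg : ∀ᵐ x ∂ν, g x ⬝ᵥ g x < ε * μ)
    {u : Lp EMField 2 ν} (hu : u ≠ 0) : 0 < ε * massForm ε μ g u u := by
  have pos : 0 < fieldDot.lpPairing ν 2 2 (ε • massOperatorLp ε μ g u) u := by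
    refine lpPairing_pos fieldDot ?_ hu
    filter_upwards [Lp.coeFn_smul ε (massOperatorLp ε μ g u), coeFn_massOperatorLp ε μ g u, hg]
      with x hsmul hmass hgx hux
    rw [hsmul, Pi.smul_apply, hmass, map_smul]
    exact mul_fieldDot_massOperator_self_pos hgx hux
  rwa [map_smul] at pos

theorem existsUnique_massForm_apply_eq {g : Lp (Fin 3 → ℝ) ∞ ν}
    (hg : ∀ᵐ x ∂ν, g x ⬝ᵥ g x < ε * μ) {V : Submodule ℝ (Lp EMField 2 ν)} [FiniteDimensional ℝ V]
    (ℓ : Module.Dual ℝ V) : ∃! u : V, ∀ v : V, massForm ε μ g u v = ℓ v := by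
  let a : V →ₗ[ℝ] V →ₗ[ℝ] ℝ := (massForm ε μ g).toLinearMap₁₂.domRestrict₁₂ V V
  have a_anisotropic (u : V) (hu : a u u = 0) : u = 0 := by
    by_contra hne
    exact (mul_massForm_self_pos hg (Submodule.coe_eq_zero.not.2 hne)).ne'
      (mul_eq_zero_of_right ε hu)
  exact existsUnique_forall_apply_eq_of_anisotropic a_anisotropic ℓ

theorem tent_mass_matrix_invertible_general {g : α → Fin 3 → ℝ} (hg : AEStronglyMeasurable g ν)
    (hcausal : ∀ᵐ x ∂ν, g x ⬝ᵥ g x < ε * μ) (V : Submodule ℝ (Lp EMField 2 ν))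
    [FiniteDimensional ℝ V] (w : Lp EMField 2 ν) :
    ∃! u : V, ∀ v : V,
      ∫ x, fieldDot (massOperator ε μ (g x) ((u : Lp EMField 2 ν) x)) ((v : Lp EMField 2 ν) x) ∂ν =
        ∫ x, fieldDot (w x) ((v : Lp EMField 2 ν) x) ∂ν := by
  have g_memLp : MemLp g ∞ ν :=
    memLp_top_of_dotProduct_self_le hg (hcausal.mono fun _ hx ↦ hx.le)
  let G : Lp (Fin 3 → ℝ) ∞ ν := g_memLp.toLp
  have hG : ∀ᵐ x ∂ν, G x = g x := g_memLp.coeFn_toLp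
  have G_causal : ∀ᵐ x ∂ν, G x ⬝ᵥ G x < ε * μ := by
    filter_upwards [hG, hcausal] with x hGx hx
    rwa [hGx]
  have massForm_G (u v : Lp EMField 2 ν) :
      massForm ε μ G u v = ∫ x, fieldDot (massOperator ε μ (g x) (u x)) (v x) ∂ν := by
    rw [massForm_apply]
    exact integral_congr_ae (hG.mono fun x hx ↦ by simp only [hx])
  let ℓ : Module.Dual ℝ V := (fieldDot.lpPairing ν 2 2 w).toLinearMap.domRestrict V
  have ℓ_apply (v : V) : ℓ v = ∫ x, fieldDot (w x) ((v : Lp EMField 2 ν) x) ∂ν :=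
    fieldDot.lpPairing_eq_integral _ _
  simpa only [massForm_G, ℓ_apply] using existsUnique_massForm_apply_eq G_causal ℓ

end MassMatrix

/-- Unique solvability of the semidiscrete mapped-tent problem on any
finite-dimensional subspace `V` of `L²(Ω; ℝ³ × ℝ³)` under the causality condition
`|g| ≤ γ < √(εμ)` a.e.: for every `w ∈ L²(Ω; ℝ³ × ℝ³)` there is a unique `û ∈ V`
with `a(û, v̂) = ∫_Ω w · v̂` for all `v̂ ∈ V`. -/
theorem tent_mass_matrix_invertible (ε μ γ : ℝ) (hε : 0 < ε) (hμ : 0 < μ)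
    (Ω : Set (Fin 3 → ℝ)) (hΩ : MeasurableSet Ω)
    (g : (Fin 3 → ℝ) → (Fin 3 → ℝ)) (hgmeas : Measurable g)
    (hγ : γ < Real.sqrt (ε * μ))
    (hbound : ∀ᵐ x ∂(volume.restrict Ω), norm3 (g x) ≤ γ)
    (V : Submodule ℝ (Lp ((Fin 3 → ℝ) × (Fin 3 → ℝ)) 2 (volume.restrict Ω)))
    (hV : FiniteDimensional ℝ V)
    (w : Lp ((Fin 3 → ℝ) × (Fin 3 → ℝ)) 2 (volume.restrict Ω)) :
    ∃! uh : V,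
      ∀ vh : V,
        aform ε μ Ω g (uh : Lp ((Fin 3 → ℝ) × (Fin 3 → ℝ)) 2 (volume.restrict Ω))
            (vh : Lp ((Fin 3 → ℝ) × (Fin 3 → ℝ)) 2 (volume.restrict Ω))
          = ∫ x in Ω,
              (dot3 ((w : (Fin 3 → ℝ) → (Fin 3 → ℝ) × (Fin 3 → ℝ)) x).1
                  (((vh : Lp ((Fin 3 → ℝ) × (Fin 3 → ℝ)) 2 (volume.restrict Ω)) :
                    (Fin 3 → ℝ) → (Fin 3 → ℝ) × (Fin 3 → ℝ)) x).1
                + dot3 ((w : (Fin 3 → ℝ) → (Fin 3 → ℝ) × (Fin 3 → ℝ)) x).2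
                  (((vh : Lp ((Fin 3 → ℝ) × (Fin 3 → ℝ)) 2 (volume.restrict Ω)) :
                    (Fin 3 → ℝ) → (Fin 3 → ℝ) × (Fin 3 → ℝ)) x).2) := by
  have hcausal : ∀ᵐ x ∂volume.restrict Ω, g x ⬝ᵥ g x < ε * μ := by
    filter_upwards [hbound] with x hx
    exact lt_imp_lt_of_le_imp_le Real.sqrt_le_sqrt (hx.trans_lt hγ)
  exact tent_mass_matrix_invertible_general hgmeas.aestronglyMeasurable hcausal V w
end
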